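/- For every n ∈ ℕ with n ≥ 1, the minimal number of monochromatic generalized Schur triples of the form (x, y, x + 3y) that can be attained under any 2-coloring of [n] of the block form R^s B^{t−s} R^{n−t} is M⁽³⁾(n) = ⌊(n² − 18n + 101)/108⌋ + c(n), where c(n) = 1 if n ≡ 36 (mod 54), c(n) = −1 if n ≡ 30 (mod 54) or n ≡ 42 (mod 54), and c(n) = 0 otherwise. -/

import Mathlib

/-- The number `M⁽ᵏ⁾(n,s,t)` of monochromatic generalized Schur triples
`(x, y, x + ky)` in `[n]³` under the block coloring `R^s B^(t-s) R^(n-t)`: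
pairs `(x,y) ∈ [n]²` such that `z = x + ky ≤ n` and `x, y, z` are all red
(`≤ s` or `> t`) or all blue (in `(s,t]`). -/
def genCount (k n s t : ℕ) : ℕ :=
  ((Finset.Icc 1 n ×ˢ Finset.Icc 1 n).filter
    (fun p => p.1 + k * p.2 ≤ n ∧
      (((p.1 ≤ s ∨ t < p.1) ∧ (p.2 ≤ s ∨ t < p.2) ∧
        (p.1 + k * p.2 ≤ s ∨ t < p.1 + k * p.2)) ∨
       ((s < p.1 ∧ p.1 ≤ t) ∧ (s < p.2 ∧ p.2 ≤ t) ∧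
        (s < p.1 + k * p.2 ∧ p.1 + k * p.2 ≤ t))))).card

/-- The correction term for `a = 3`: `1` if `n ≡ 36 (mod 54)`, `−1` if
`n ≡ 30` or `n ≡ 42 (mod 54)`, and `0` otherwise. -/
def corr3 (n : ℕ) : ℤ :=
  if n % 54 = 36 then 1 else if n % 54 = 30 ∨ n % 54 = 42 then -1 else 0

/-!
Under the colouring `R^s B^(t-s) R^(n-t)` the monochromatic pairs fill lattice triangles and
trapezoids. If `4 * s ≤ t` and `n - t ≤ 3 * s + 3` they are three triangles of sizes `a = s`,
`b = n - t` and `c = t - 4 * s`, where a triangle of size `m` has `T m = ⌊(m - 1) * (m - 2) / 6⌋`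
points, so that `6 * T m = m² - 3 * m`, plus `2` when `3 ∤ m`. As `n = 4 * a + b + c`, completing
squares gives `18 * ∑ (m² - 3 * m) = n² - 18 * n + 2 * μ * (μ - 9) + 9 * (b - c)²` with
`μ = 2 * (b + c) - a`. The remainder is at least `-40`, and every size not divisible by `3`
contributes another `36`. Only when all sizes are divisible by `3` can the total drop below the
bound that the floor allows, which happens for `n ≡ 30, 42 (mod 54)`, while for `n ≡ 36 (mod 54)`
no choice of sizes gives the remainder `0` required by congruence modulo `108`. All other block
colourings exceed the bound by a margin.
-/

open Finset

section Trapezoids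

/-- The lattice trapezoid of pairs `(x, y)` with `u < x`, `v < y ≤ w` and `x + k * y ≤ z`; it is a
triangle when the bound `y ≤ w` is implied by the others. -/
def trapezoid (k u v w z : ℕ) : Finset (ℕ × ℕ) :=
  {p ∈ Ioc u z ×ˢ Ioc v w | p.1 + k * p.2 ≤ z}

theorem mem_trapezoid {k u v w z x y : ℕ} :
    (x, y) ∈ trapezoid k u v w z ↔ u < x ∧ v < y ∧ y ≤ w ∧ x + k * y ≤ z := by
  simp only [trapezoid, mem_filter, mem_product, mem_Ioc]
  omega

theorem card_trapezoid (k u v w z : ℕ) :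
    #(trapezoid k u v w z) = ∑ j ∈ range (w - v), (z - u - k * v - k * (j + 1)) := by
  have card_row (y : ℕ) : #{x ∈ Ioc u z | x + k * y ≤ z} = z - u - k * y := by
    rw [show {x ∈ Ioc u z | x + k * y ≤ z} = Ioc u (z - k * y) by
      ext x; simp only [mem_filter, mem_Ioc]; omega, Nat.card_Ioc]
    omega
  calc #(trapezoid k u v w z)
      = ∑ y ∈ Ioc v w, #{x ∈ Ioc u z | x + k * y ≤ z} := by
        simp only [trapezoid, card_filter, sum_product_right]
    _ = ∑ y ∈ Ico (v + 1) (w + 1), (z - u - k * y) := by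
        simp only [card_row, Ico_add_one_add_one_eq_Ioc]
    _ = ∑ j ∈ range (w - v), (z - u - k * v - k * (j + 1)) := by
        rw [sum_Ico_eq_sum_range, Nat.add_sub_add_right]
        refine sum_congr rfl fun j _ => ?_
        rw [Nat.sub_sub (z - u), ← mul_add, add_right_comm, add_assoc]

theorem two_mul_card_trapezoid {k u w z : ℕ} (hz : u + k * w ≤ z) :
    2 * (#(trapezoid k u 0 w z) : ℤ) = w * (2 * (z - u) - k * (w + 1)) := by
  rw [card_trapezoid, mul_zero, Nat.sub_zero, Nat.sub_zero]
  induction w with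
  | zero => simp
  | succ w ih =>
    rw [mul_add_one] at hz
    rw [sum_range_succ, Nat.cast_add, mul_add, ih (by omega),
      Nat.cast_sub (by rw [mul_add_one]; omega), Nat.cast_sub (by omega)]
    push_cast
    ring

end Trapezoids

section TriangleCount

/-- The number of pairs of positive integers `(x, y)` with `x + 3 * y ≤ m`, as a quasi-polynomial in
`m`; for negative `m` it is just the value of the formula. -/
def triangleCount (m : ℤ) : ℤ := (m - 1) * (m - 2) / 6

theorem triangleCount_add_three (m : ℤ) : triangleCount (m + 3) = triangleCount m + m := by
  rw [triangleCount, triangleCount, ← Int.add_mul_ediv_right _ _ (by norm_num : (6 : ℤ) ≠ 0)]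
  ring_nf

theorem card_trapezoid_three {u v w z m : ℕ} (hm : z - u - 3 * v = m) (hw : m ≤ 3 * (w - v) + 3) :
    (#(trapezoid 3 u v w z) : ℤ) = triangleCount m := by
  rw [card_trapezoid, hm]
  clear hm
  generalize w - v = rows at hw ⊢
  induction rows generalizing m with
  | zero =>
    have hm : m ≤ 3 := by omega
    interval_cases m <;> rfl
  | succ rows ih =>
    obtain hm | ⟨m, rfl⟩ : m < 3 ∨ ∃ l, m = l + 3 :=
      (lt_or_ge m 3).imp_right fun h => ⟨m - 3, by omega⟩
    · have hzero : ∀ j ∈ range (rows + 1), m - 3 * (j + 1) = 0 := fun j _ => by omega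
      rw [sum_eq_zero hzero]
      interval_cases m <;> rfl
    · have hshift (j : ℕ) : m + 3 - 3 * (j + 1 + 1) = m - 3 * (j + 1) := by omega
      rw [sum_range_succ', Nat.cast_add, sum_congr rfl fun j _ => hshift j, ih (by omega)]
      simp [triangleCount_add_three]

theorem int_mul_add_one_nonneg (m : ℤ) : 0 ≤ m * (m + 1) := by
  obtain h | h := le_or_gt 0 m
  · positivity
  · exact mul_nonneg_of_nonpos_of_nonpos h.le h

theorem triangleCount_nonneg (m : ℤ) : 0 ≤ triangleCount m :=
  Int.ediv_nonneg (by linarith [int_mul_add_one_nonneg (m - 2)]) (by norm_num)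

theorem six_mul_triangleCount_of_dvd {m : ℤ} (hm : 3 ∣ m) :
    6 * triangleCount m = m ^ 2 - 3 * m := by
  obtain ⟨q, rfl⟩ := hm
  obtain ⟨r, hr⟩ := Int.even_mul_pred_self q
  have hprod : (3 * q - 1) * (3 * q - 2) = 18 * r + 2 := by linear_combination 9 * hr
  rw [triangleCount, hprod]
  linear_combination 6 * (by omega : (18 * r + 2) / 6 = 3 * r) - 9 * hr

theorem six_mul_triangleCount_of_not_dvd {m : ℤ} (hm : ¬3 ∣ m) :
    6 * triangleCount m = m ^ 2 - 3 * m + 2 := by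
  have h2 : (2 : ℤ) ∣ (m - 1) * (m - 2) := by
    obtain h | h : 2 ∣ m - 1 ∨ 2 ∣ m - 2 := by omega
    exacts [h.mul_right _, h.mul_left _]
  have h3 : (3 : ℤ) ∣ (m - 1) * (m - 2) := by
    obtain h | h : 3 ∣ m - 1 ∨ 3 ∣ m - 2 := by omega
    exacts [h.mul_right _, h.mul_left _]
  rw [triangleCount, Int.mul_ediv_cancel' (by omega)]
  ring

theorem le_six_mul_triangleCount (m : ℤ) : m ^ 2 - 3 * m ≤ 6 * triangleCount m := by
  by_cases hm : 3 ∣ m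
  · exact (six_mul_triangleCount_of_dvd hm).ge
  · linarith [six_mul_triangleCount_of_not_dvd hm]

theorem six_mul_triangleCount_le (m : ℤ) : 6 * triangleCount m ≤ m ^ 2 - 3 * m + 2 := by
  by_cases hm : 3 ∣ m
  · linarith [six_mul_triangleCount_of_dvd hm]
  · exact (six_mul_triangleCount_of_not_dvd hm).le

end TriangleCount

section MonochromaticPairs

variable {k n s t : ℕ}

theorem card_trapezoids_le_genCount (hst : s ≤ t) (htn : t ≤ n) :
    #(trapezoid k 0 0 s s) + #(trapezoid k t 0 s n) + #(trapezoid k s s t t) +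
      #(trapezoid k t t n n) ≤ genCount k n s t := by
  rw [← card_union_of_disjoint, ← card_union_of_disjoint, ← card_union_of_disjoint]
  · refine card_le_card ?_
    rintro ⟨x, y⟩ h
    simp only [mem_union, mem_trapezoid, mem_filter, mem_product, mem_Icc] at h ⊢
    omega
  all_goals
    rw [disjoint_left]
    rintro ⟨x, y⟩
    simp only [mem_union, mem_trapezoid]
    omega

theorem genCount_le_card_trapezoids (hst : s + k * s ≤ t) (hnt : n ≤ k * t) :
    genCount k n s t ≤
      #(trapezoid k 0 0 s s) + #(trapezoid k t 0 s n) + #(trapezoid k s s t t) := by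
  refine le_trans (card_le_card ?_)
    ((card_union_le _ _).trans (Nat.add_le_add_right (card_union_le _ _) _))
  rintro ⟨x, y⟩ h
  simp only [mem_union, mem_trapezoid, mem_filter, mem_product, mem_Icc] at h ⊢
  have hlow : y ≤ s → k * y ≤ k * s := Nat.mul_le_mul_left k
  have hhigh : t ≤ y → k * t ≤ k * y := Nat.mul_le_mul_left k
  omega

theorem genCount_three_le {a b c : ℕ} (ha : 1 ≤ a) (hb : b ≤ 3 * a + 3) :
    (genCount 3 (4 * a + b + c) a (4 * a + c) : ℤ) ≤
      triangleCount a + triangleCount b + triangleCount c := by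
  have hlow := card_trapezoid_three (u := 0) (v := 0) (w := a) (z := a) (m := a)
    (by omega) (by omega)
  have hright := card_trapezoid_three (u := 4 * a + c) (v := 0) (w := a) (z := 4 * a + b + c)
    (m := b) (by omega) (by omega)
  have hblue := card_trapezoid_three (u := a) (v := a) (w := 4 * a + c) (z := 4 * a + c) (m := c)
    (by omega) (by omega)
  rw [← hlow, ← hright, ← hblue]
  exact_mod_cast genCount_le_card_trapezoids (by omega) (by omega)

theorem triangleCounts_le_genCount_three (hst : s ≤ t) (htn : t ≤ n) :
    triangleCount s + #(trapezoid 3 t 0 s n) + triangleCount (t - 4 * s : ℕ) +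
      triangleCount (n - 4 * t : ℕ) ≤ (genCount 3 n s t : ℤ) := by
  rw [← card_trapezoid_three (u := 0) (v := 0) (w := s) (z := s) (by omega) (by omega),
    ← card_trapezoid_three (u := s) (v := s) (w := t) (z := t) (by omega) (by omega),
    ← card_trapezoid_three (u := t) (v := t) (w := n) (z := n) (by omega) (by omega)]
  exact_mod_cast card_trapezoids_le_genCount hst htn

end MonochromaticPairs

section Minimum

/-- The claimed minimum `⌊(n² - 18 * n + 101) / 108⌋ + c(n)`. -/
def blockMin (n : ℕ) : ℤ := ((n : ℤ) ^ 2 - 18 * n + 101) / 108 + corr3 n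

theorem dvd_sq_sub_of_mod_eq {n : ℕ} (hn : n % 54 = 36) : (108 : ℤ) ∣ (n : ℤ) ^ 2 - 18 * n := by
  obtain ⟨q, hq⟩ : ∃ q : ℤ, (n : ℤ) = 54 * q + 36 := ⟨n / 54, by omega⟩
  exact ⟨27 * q ^ 2 + 27 * q + 6, by rw [hq]; ring⟩

theorem blockMin_le {n : ℕ} {S : ℤ} (hS : (n : ℤ) ^ 2 - 18 * n - 6 ≤ 108 * S)
    (h36 : n % 54 = 36 → (n : ℤ) ^ 2 - 18 * n < 108 * S) : blockMin n ≤ S := by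
  rw [blockMin, corr3]
  split_ifs with h
  · have hdvd := dvd_sq_sub_of_mod_eq h
    have hlt := h36 h
    omega
  all_goals omega

theorem blockMin_le_of_lt {n : ℕ} {S : ℤ} (hS : (n : ℤ) ^ 2 - 18 * n < 108 * S) :
    blockMin n ≤ S :=
  blockMin_le (by omega) fun _ => hS

theorem le_blockMin {n : ℕ} {S : ℤ} (h30 : n % 54 ≠ 30) (h42 : n % 54 ≠ 42)
    (hS : 108 * S ≤ (n : ℤ) ^ 2 - 18 * n + 101) : S ≤ blockMin n := by
  rw [blockMin, corr3]
  split_ifs <;> omega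

theorem eighteen_mul_sum_eq (a b c : ℤ) :
    18 * (a ^ 2 - 3 * a + (b ^ 2 - 3 * b) + (c ^ 2 - 3 * c)) =
      (4 * a + b + c) ^ 2 - 18 * (4 * a + b + c) +
        (2 * (2 * (b + c) - a) * (2 * (b + c) - a - 9) + 9 * (b - c) ^ 2) := by
  ring

theorem neg_forty_le_remainder (μ w : ℤ) : -40 ≤ 2 * μ * (μ - 9) + 9 * w ^ 2 := by
  linarith [int_mul_add_one_nonneg (μ - 5), sq_nonneg w]

theorem sum_triangleCount_of_dvd {a b c : ℤ} (ha : 3 ∣ a) (hb : 3 ∣ b) (hc : 3 ∣ c) :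
    108 * (triangleCount a + triangleCount b + triangleCount c) =
      (4 * a + b + c) ^ 2 - 18 * (4 * a + b + c) +
        (2 * (2 * (b + c) - a) * (2 * (b + c) - a - 9) + 9 * (b - c) ^ 2) := by
  linear_combination 18 * six_mul_triangleCount_of_dvd ha + 18 * six_mul_triangleCount_of_dvd hb +
    18 * six_mul_triangleCount_of_dvd hc

theorem le_sum_triangleCount_of_not_dvd {a b c : ℤ} (h : ¬(3 ∣ a ∧ 3 ∣ b ∧ 3 ∣ c)) :
    18 * (a ^ 2 - 3 * a + (b ^ 2 - 3 * b) + (c ^ 2 - 3 * c)) + 36 ≤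
      108 * (triangleCount a + triangleCount b + triangleCount c) := by
  have ha := le_six_mul_triangleCount a
  have hb := le_six_mul_triangleCount b
  have hc := le_six_mul_triangleCount c
  obtain h | h | h : ¬3 ∣ a ∨ ¬3 ∣ b ∨ ¬3 ∣ c := by omega
  all_goals linarith [six_mul_triangleCount_of_not_dvd h]

theorem le_sum_triangleCount_of_not_dvd_of_dvd {a b c : ℤ} (h : ¬(3 ∣ a ∧ 3 ∣ b ∧ 3 ∣ c))
    (hsum : 3 ∣ a + b + c) :
    18 * (a ^ 2 - 3 * a + (b ^ 2 - 3 * b) + (c ^ 2 - 3 * c)) + 72 ≤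
      108 * (triangleCount a + triangleCount b + triangleCount c) := by
  have ha := le_six_mul_triangleCount a
  have hb := le_six_mul_triangleCount b
  have hc := le_six_mul_triangleCount c
  obtain ⟨h, h'⟩ | ⟨h, h'⟩ | ⟨h, h'⟩ :
      ¬3 ∣ a ∧ ¬3 ∣ b ∨ ¬3 ∣ b ∧ ¬3 ∣ c ∨ ¬3 ∣ a ∧ ¬3 ∣ c := by omega
  all_goals linarith [six_mul_triangleCount_of_not_dvd h, six_mul_triangleCount_of_not_dvd h']

theorem blockMin_le_of_not_dvd {n : ℕ} {a b c : ℤ} (hn : 4 * a + b + c = n)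
    (h : ¬(3 ∣ a ∧ 3 ∣ b ∧ 3 ∣ c)) :
    blockMin n ≤ triangleCount a + triangleCount b + triangleCount c := by
  have hsum := eighteen_mul_sum_eq a b c
  rw [hn] at hsum
  have hrem := neg_forty_le_remainder (2 * (b + c) - a) (b - c)
  refine blockMin_le ?_ fun h36 => ?_
  · linarith [le_sum_triangleCount_of_not_dvd h]
  · linarith [le_sum_triangleCount_of_not_dvd_of_dvd h (by omega)]

theorem eq_zero_of_remainder_nonpos {μ w : ℤ} (h : 2 * μ * (μ - 3) + 9 * w ^ 2 ≤ 0) :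
    w = 0 ∧ 0 ≤ μ ∧ μ ≤ 3 := by
  have hw : w ^ 2 < 1 := by linarith [int_mul_add_one_nonneg (μ - 2)]
  obtain rfl : w = 0 := by nlinarith
  exact ⟨rfl, by nlinarith, by nlinarith⟩

theorem sum_triangleCount_eq_blockMin {n : ℕ} {b μ : ℤ} (hn : (n : ℤ) = 54 * b - 12 * μ)
    (h0 : 0 ≤ μ) (h3 : μ ≤ 3) :
    triangleCount (12 * b - 3 * μ) + triangleCount (3 * b) + triangleCount (3 * b) =
      blockMin n := by
  have hsum := sum_triangleCount_of_dvd (a := 12 * b - 3 * μ) (b := 3 * b) (c := 3 * b)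
    (by omega) (by omega) (by omega)
  rw [show 4 * (12 * b - 3 * μ) + 3 * b + 3 * b = (n : ℤ) by rw [hn]; ring,
    show 2 * (3 * b + 3 * b) - (12 * b - 3 * μ) = 3 * μ by ring, sub_self] at hsum
  rw [blockMin, corr3]
  interval_cases μ <;> split_ifs <;> omega

theorem blockMin_le_of_dvd {n : ℕ} {a b c : ℤ} (hn : 4 * (3 * a) + 3 * b + 3 * c = n) :
    blockMin n ≤ triangleCount (3 * a) + triangleCount (3 * b) + triangleCount (3 * c) := by
  have hsum :=
    sum_triangleCount_of_dvd (dvd_mul_right 3 a) (dvd_mul_right 3 b) (dvd_mul_right 3 c)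
  rw [hn] at hsum
  obtain hpos | hneg :=
    lt_or_ge 0 (2 * (2 * (b + c) - a) * (2 * (b + c) - a - 3) + 9 * (b - c) ^ 2)
  · exact blockMin_le_of_lt (by linarith)
  · obtain ⟨hbc, h0, h3⟩ := eq_zero_of_remainder_nonpos hneg
    obtain rfl : c = b := by omega
    have ha : 12 * c - 3 * (2 * (c + c) - a) = 3 * a := by ring
    rw [← sum_triangleCount_eq_blockMin (b := c) (by linarith) h0 h3, ha]

theorem blockMin_le_sum_triangleCount {n : ℕ} {a b c : ℤ} (hn : 4 * a + b + c = n) :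
    blockMin n ≤ triangleCount a + triangleCount b + triangleCount c := by
  by_cases h : 3 ∣ a ∧ 3 ∣ b ∧ 3 ∣ c
  · obtain ⟨⟨a, rfl⟩, ⟨b, rfl⟩, ⟨c, rfl⟩⟩ := h
    exact blockMin_le_of_dvd hn
  · exact blockMin_le_of_not_dvd hn h

theorem sq_sub_lt_of_lt_add {n s b : ℕ} (hn : 1 ≤ n) (hlt : n < 4 * s + b) :
    (n : ℤ) ^ 2 - 18 * n < 108 * (triangleCount s + triangleCount b) := by
  have hTs := le_six_mul_triangleCount s
  have hTb := le_six_mul_triangleCount b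
  zify at hlt hn
  obtain hsmall | hlarge := lt_or_ge n 18
  · zify at hsmall
    nlinarith [triangleCount_nonneg s, triangleCount_nonneg b]
  · zify at hlarge
    have hmono : (n : ℤ) * (n - 18) ≤ (4 * s + b - 1) * (4 * s + b - 1 - 18) := by
      gcongr <;> linarith
    nlinarith [sq_nonneg (17 * b - 4 * s - 17 : ℤ)]

theorem sq_sub_lt_of_four_mul_le_of_four_mul_le {n s t : ℤ} (hs : 1 ≤ s) (hst : 4 * s ≤ t)
    (htn : 4 * t ≤ n) :
    n ^ 2 - 18 * n < 54 * (s * (2 * (n - t) - 3 * (s + 1))) +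
      18 * ((t - 4 * s) ^ 2 - 3 * (t - 4 * s)) + 18 * ((n - 4 * t) ^ 2 - 3 * (n - 4 * t)) := by
  -- The leading terms satisfy `17 * (t² + (n - 4 * t)²) = (17 * t - 4 * n)² + n²`.
  nlinarith [sq_nonneg (17 * t - 4 * n), mul_nonneg (sub_nonneg.2 htn) (sub_nonneg.2 hs),
    mul_nonneg (by omega : 0 ≤ n) (sub_nonneg.2 hs)]

theorem sq_sub_lt_of_lt_of_four_mul_le {n s t : ℤ} (hst : s ≤ t) (hts : t < 4 * s)
    (htn : 4 * t ≤ n) :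
    n ^ 2 - 18 * n < 54 * (s * (2 * (n - t) - 3 * (s + 1))) +
      18 * ((n - 4 * t) ^ 2 - 3 * (n - 4 * t)) := by
  have hs : 1 ≤ s := by omega
  nlinarith [mul_nonneg (sub_nonneg.2 htn) (sub_nonneg.2 hs)]

theorem sq_sub_lt_of_lt_of_lt {n s t : ℤ} (hst : s ≤ t) (hts : t < 4 * s) (hnt : n < 4 * t)
    (hfar : 3 * s + 3 < n - t) :
    n ^ 2 - 18 * n < 54 * (s * (2 * (n - t) - 3 * (s + 1))) := by
  nlinarith

theorem neg_sq_add_pos_of_endpoints {x x₀ x₁ p q : ℤ} (h₀ : x₀ ≤ x) (h₁ : x ≤ x₁)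
    (hpos₀ : 0 < -x₀ ^ 2 + p * x₀ + q) (hpos₁ : 0 < -x₁ ^ 2 + p * x₁ + q) :
    0 < -x ^ 2 + p * x + q := by
  obtain h | h := le_or_gt p (x + x₀) <;> nlinarith

theorem sq_sub_lt_of_four_mul_le_of_lt {n s t : ℤ} (hs : 1 ≤ s) (hst : 4 * s ≤ t)
    (hnt : n < 4 * t) (hfar : 3 * s + 3 < n - t) :
    n ^ 2 - 18 * n < 54 * (s * (2 * (n - t) - 3 * (s + 1))) +
      18 * ((t - 4 * s) ^ 2 - 3 * (t - 4 * s)) := by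
  obtain ⟨b, rfl⟩ : ∃ b, n = t + b := ⟨n - t, by ring⟩
  obtain ⟨d, rfl⟩ : ∃ d, t = 4 * s + d := ⟨t - 4 * s, by ring⟩
  -- In terms of `b = n - t` the difference of the two sides is concave.
  have hdiff := neg_sq_add_pos_of_endpoints (x := b) (x₀ := 3 * s + 4) (x₁ := 12 * s + 3 * d - 1)
    (p := 100 * s - 2 * d + 18) (q := 17 * d ^ 2 - 8 * s * d - 178 * s ^ 2 - 36 * d - 90 * s)
    (by omega) (by omega) (by nlinarith [sq_nonneg (17 * d - 7 * s - 22)]) (by nlinarith)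
  linarith

theorem sq_sub_lt_of_far {n s t : ℕ} (hs : 1 ≤ s) (hst : s ≤ t) (hfar : 3 * s + 3 < n - t) :
    (n : ℤ) ^ 2 - 18 * n < 108 * (#(trapezoid 3 t 0 s n) + triangleCount (t - 4 * s : ℕ) +
      triangleCount (n - 4 * t : ℕ)) := by
  have hcard : 2 * (#(trapezoid 3 t 0 s n) : ℤ) = s * (2 * (n - t) - 3 * (s + 1)) :=
    mod_cast two_mul_card_trapezoid (k := 3) (by omega)
  have hblue (h : 4 * s ≤ t) :
      ((t : ℤ) - 4 * s) ^ 2 - 3 * (t - 4 * s) ≤ 6 * triangleCount (t - 4 * s : ℕ) := by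
    rw [show (t : ℤ) - 4 * s = (t - 4 * s : ℕ) by omega]
    exact le_six_mul_triangleCount _
  have hred (h : 4 * t ≤ n) :
      ((n : ℤ) - 4 * t) ^ 2 - 3 * (n - 4 * t) ≤ 6 * triangleCount (n - 4 * t : ℕ) := by
    rw [show (n : ℤ) - 4 * t = (n - 4 * t : ℕ) by omega]
    exact le_six_mul_triangleCount _
  have hblue_nonneg := triangleCount_nonneg (t - 4 * s : ℕ)
  have hred_nonneg := triangleCount_nonneg (n - 4 * t : ℕ)
  have hfar' : 3 * (s : ℤ) + 3 < n - t := by omega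
  obtain hts | hts := lt_or_ge t (4 * s) <;> obtain hnt | hnt := lt_or_ge n (4 * t) <;>
    zify at hs hst
  · linarith [sq_sub_lt_of_lt_of_lt hst (mod_cast hts) (mod_cast hnt) hfar']
  · linarith [hred hnt, sq_sub_lt_of_lt_of_four_mul_le hst (mod_cast hts)
      (by exact_mod_cast hnt : 4 * (t : ℤ) ≤ n)]
  · linarith [hblue hts, sq_sub_lt_of_four_mul_le_of_lt hs (mod_cast hts) (mod_cast hnt) hfar']
  · linarith [hblue hts, hred hnt, sq_sub_lt_of_four_mul_le_of_four_mul_le hs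
      (by exact_mod_cast hts : 4 * (s : ℤ) ≤ t) (by exact_mod_cast hnt : 4 * (t : ℤ) ≤ n)]

theorem blockMin_le_genCount {n s t : ℕ} (hs : 1 ≤ s) (hst : s ≤ t) (htn : t ≤ n) :
    blockMin n ≤ genCount 3 n s t := by
  have hcount := triangleCounts_le_genCount_three hst htn
  have hlow := triangleCount_nonneg s
  have hblue := triangleCount_nonneg (t - 4 * s : ℕ)
  have hred := triangleCount_nonneg (n - 4 * t : ℕ)
  obtain hnear | hfar := le_or_gt (n - t) (3 * s + 3)
  · rw [card_trapezoid_three (m := n - t) (by omega) (by omega)] at hcount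
    obtain hts | hts := lt_or_ge t (4 * s)
    · have hlt : n < 4 * s + (n - t) := by omega
      linarith [blockMin_le_of_lt (sq_sub_lt_of_lt_add (by omega) hlt)]
    · have hn : 4 * (s : ℤ) + (n - t : ℕ) + (t - 4 * s : ℕ) = n := by omega
      linarith [blockMin_le_sum_triangleCount hn]
  · linarith [blockMin_le_of_lt (sq_sub_lt_of_far hs hst hfar)]

theorem sum_triangleCount_le_blockMin_of_not_nine_dvd {n a b c : ℕ} (hn : 4 * a + b + c = n)
    (h9 : 9 * a < 2 * n) (h9' : 2 * n < 9 * (a + 1)) (hbc : b ≤ c) (hcb : c ≤ b + 1)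
    (h30 : n % 54 ≠ 30) (h42 : n % 54 ≠ 42) :
    triangleCount a + triangleCount b + triangleCount c ≤ blockMin n := by
  have hsum := eighteen_mul_sum_eq a b c
  rw [show 4 * (a : ℤ) + b + c = n by omega] at hsum
  have hμ : 0 ≤ (2 * (b + c : ℤ) - a - 1) * (8 - (2 * (b + c) - a)) :=
    mul_nonneg (by omega) (by omega)
  have hw : (b - c : ℤ) ^ 2 ≤ 1 := (sq_le_one_iff_abs_le_one _).2 (abs_le.2 ⟨by omega, by omega⟩)
  refine le_blockMin h30 h42 ?_
  linarith [six_mul_triangleCount_le a, six_mul_triangleCount_le b, six_mul_triangleCount_le c]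

theorem sum_triangleCount_le_blockMin_eighteen_mul_add_nine (j : ℕ) :
    triangleCount (4 * j + 2 : ℕ) + triangleCount j + triangleCount (j + 1 : ℕ) ≤
      blockMin (18 * j + 9) := by
  refine le_blockMin (by omega) (by omega) ?_
  have ha := six_mul_triangleCount_le (4 * j + 2 : ℕ)
  have hb := six_mul_triangleCount_le j
  have hc := six_mul_triangleCount_le (j + 1 : ℕ)
  push_cast at ha hb hc ⊢
  have hj : (j : ℤ) % 3 = 0 ∨ (j : ℤ) % 3 = 1 ∨ (j : ℤ) % 3 = 2 := by omega
  obtain h | h | h : (3 : ℤ) ∣ 4 * j + 2 ∨ (3 : ℤ) ∣ j ∨ (3 : ℤ) ∣ j + 1 := by omega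
  all_goals linarith [six_mul_triangleCount_of_dvd h]

theorem sum_triangleCount_le_blockMin_fiftyFour_mul_add_thirtySix (j : ℕ) :
    triangleCount (12 * j + 8 : ℕ) + triangleCount (3 * j + 2 : ℕ) +
      triangleCount (3 * j + 2 : ℕ) ≤ blockMin (54 * j + 36) := by
  have ha := six_mul_triangleCount_le (12 * j + 8 : ℕ)
  have hb := six_mul_triangleCount_le (3 * j + 2 : ℕ)
  have h36 : (54 * j + 36) % 54 = 36 := by omega
  have hdvd := dvd_sq_sub_of_mod_eq h36
  have hle : 108 * (triangleCount (12 * j + 8 : ℕ) + triangleCount (3 * j + 2 : ℕ) +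
      triangleCount (3 * j + 2 : ℕ)) ≤
        ((54 * j + 36 : ℕ) : ℤ) ^ 2 - 18 * (54 * j + 36 : ℕ) + 108 := by
    push_cast at ha hb ⊢
    linarith
  rw [blockMin, corr3, if_pos h36]
  omega

theorem residue_cases (n : ℕ) :
    (∃ β μ, μ ≤ 3 ∧ n + 12 * μ = 54 * β) ∨ (∃ j, n = 54 * j + 36) ∨ (∃ j, n = 18 * j + 9) ∨
      (2 * n % 9 ≠ 0 ∧ n % 54 ≠ 30 ∧ n % 54 ≠ 42) := by
  by_cases h0 : n % 54 = 0
  · exact .inl ⟨n / 54, 0, by omega, by omega⟩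
  by_cases h42 : n % 54 = 42
  · exact .inl ⟨n / 54 + 1, 1, by omega, by omega⟩
  by_cases h30 : n % 54 = 30
  · exact .inl ⟨n / 54 + 1, 2, by omega, by omega⟩
  by_cases h18 : n % 54 = 18
  · exact .inl ⟨n / 54 + 1, 3, by omega, by omega⟩
  by_cases h36 : n % 54 = 36
  · exact .inr (.inl ⟨n / 54, by omega⟩)
  by_cases h9 : n % 18 = 9
  · exact .inr (.inr (.inl ⟨n / 18, by omega⟩))
  · exact .inr (.inr (.inr (by omega)))

theorem exists_sum_triangleCount_le_blockMin {n : ℕ} (hn : 5 ≤ n) :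
    ∃ a b c : ℕ, 1 ≤ a ∧ b ≤ 3 * a + 3 ∧ 4 * a + b + c = n ∧
      triangleCount a + triangleCount b + triangleCount c ≤ blockMin n := by
  obtain ⟨β, μ, hμ, hβ⟩ | ⟨j, rfl⟩ | ⟨j, rfl⟩ | ⟨h9, h30, h42⟩ := residue_cases n
  · refine ⟨12 * β - 3 * μ, 3 * β, 3 * β, by omega, by omega, by omega, ?_⟩
    rw [← sum_triangleCount_eq_blockMin (b := β) (μ := μ) (by omega) (by omega) (by omega),
      Nat.cast_sub (by omega)]
    push_cast
    rfl
  · exact ⟨12 * j + 8, 3 * j + 2, 3 * j + 2, by omega, by omega, by omega,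
      sum_triangleCount_le_blockMin_fiftyFour_mul_add_thirtySix j⟩
  · exact ⟨4 * j + 2, j, j + 1, by omega, by omega, by omega,
      sum_triangleCount_le_blockMin_eighteen_mul_add_nine j⟩
  -- `a = ⌊2 * n / 9⌋` makes `μ = 2 * (b + c) - a` the residue of `2 * n` modulo `9`.
  · refine ⟨2 * n / 9, (n - 4 * (2 * n / 9)) / 2, (n - 4 * (2 * n / 9) + 1) / 2,
      by omega, by omega, by omega,
      sum_triangleCount_le_blockMin_of_not_nine_dvd ?_ ?_ ?_ ?_ ?_ h30 h42⟩
    all_goals omega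

theorem exists_genCount_le_blockMin {n : ℕ} (hn : 1 ≤ n) :
    ∃ s t : ℕ, 1 ≤ s ∧ s ≤ t ∧ t ≤ n ∧ genCount 3 n s t ≤ blockMin n := by
  obtain hsmall | hlarge := lt_or_ge n 5
  · refine ⟨1, n, le_rfl, hn, le_rfl, ?_⟩
    interval_cases n <;> decide
  · obtain ⟨a, b, c, ha, hb, rfl, hle⟩ := exists_sum_triangleCount_le_blockMin hlarge
    exact ⟨a, 4 * a + c, ha, by omega, by omega, (genCount_three_le ha hb).trans hle⟩

end Minimum

/-- For every `n ≥ 1`, the minimum over all block colorings `R^s B^(t-s) R^(n-t)`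
(`1 ≤ s ≤ t ≤ n`) of the number of monochromatic triples `(x, y, x+3y)` equals
`⌊(n² − 18n + 101)/108⌋ + c(n)`. -/
theorem min_genCount_three (n : ℕ) (hn : 1 ≤ n) :
    (∀ s t : ℕ, 1 ≤ s → s ≤ t → t ≤ n →
      ((n : ℤ) ^ 2 - 18 * n + 101) / 108 + corr3 n ≤ (genCount 3 n s t : ℤ)) ∧
    (∃ s t : ℕ, 1 ≤ s ∧ s ≤ t ∧ t ≤ n ∧
      (genCount 3 n s t : ℤ) = ((n : ℤ) ^ 2 - 18 * n + 101) / 108 + corr3 n) := by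
  refine ⟨fun s t => blockMin_le_genCount, ?_⟩
  obtain ⟨s, t, hs, hst, htn, hle⟩ := exists_genCount_le_blockMin hn
  exact ⟨s, t, hs, hst, htn, hle.antisymm (blockMin_le_genCount hs hst htn)⟩
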